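/- For integers 0 < a < b ≤ d and n ≥ 1, ℓ_d^{(a,b)}(n) = ∑_{k ≥ 0, a+dk ≤ n} C(2k + n − a − dk, n − a − dk) + ∑_{k ≥ 0, b+dk ≤ n} C(2k + 1 + n − b − dk, n − b − dk), where C denotes the binomial coefficient. -/

import Mathlib

open Multiset Finset Filter

/-- A partition is encoded as a nonempty multiset of positive integers (its parts). -/
def IsPartition (M : Multiset ℕ) : Prop := M ≠ 0 ∧ ∀ x ∈ M, 0 < x

/-- The perimeter of a partition: (largest part) + (number of parts) - 1. -/
def perim (M : Multiset ℕ) : ℕ := M.sup + Multiset.card M - 1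

/-- `rP n P` counts the partitions (of any sum) with perimeter `n` satisfying `P`. -/
noncomputable def rP (n : ℕ) (P : Multiset ℕ → Prop) : ℕ :=
  Set.ncard {M : Multiset ℕ | IsPartition M ∧ perim M = n ∧ P M}

/-- `ellP d a b n`: partitions of perimeter n with every part ≡ a or ≡ b (mod d). -/
noncomputable def ellP (d a b n : ℕ) : ℕ :=
  rP n (fun M => ∀ x ∈ M, x % d = a % d ∨ x % d = b % d)

/-!
Deleting one copy of the largest part `L` from a partition of perimeter `n` leaves an arbitrary
multiset of `n - L` admissible parts not exceeding `L`, so stars and bars counts the partitions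
with a given `L`. When the admissible parts are those congruent to an element of `R ⊆ [1, d]`
modulo `d`, each of them is uniquely `c + d k` with `c ∈ R`, and exactly
`|R| k + #{s ∈ R | s ≤ c}` of them do not exceed `c + d k`: every full period contributes `|R|`.
For `R = {a, b}` this is `2 k + 1` when `c = a` and `2 k + 2` when `c = b`.
-/

theorem multiset_sup_mem {α : Type*} [LinearOrder α] [OrderBot α] {M : Multiset α} (hM : M ≠ 0) :
    M.sup ∈ M := by
  induction M using Multiset.induction with
  | empty => exact absurd rfl hM
  | cons x s ih =>
    rw [Multiset.sup_cons]
    rcases eq_or_ne s 0 with rfl | hs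
    · simp
    · rcases max_choice x s.sup with h | h <;> simp [h, ih hs]

theorem card_finset_sym {α : Type*} [DecidableEq α] (s : Finset α) (k : ℕ) :
    #(s.sym k) = (#s).multichoose k := by
  conv_lhs => rw [← s.attach_map_val, sym_map, Finset.card_map, attach_eq_univ, sym_univ, card_univ,
    Sym.card_sym_eq_multichoose, Fintype.card_coe]

section LargestPart

/-- The partitions with largest part `L` and `m + 1` parts, all satisfying `p`, obtained by adding
the part `L` to `m` parts of size at most `L`. The part `L` is inserted unconditionally, so this
is the intended set only when `L` is positive and satisfies `p`. -/
def partitionsWithLargest (p : ℕ → Prop) [DecidablePred p] (L m : ℕ) : Finset (Multiset ℕ) :=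
  (Finset.sym {x ∈ Finset.Icc 1 L | p x} m).image fun t : Sym ℕ m => L ::ₘ (t : Multiset ℕ)

variable {p : ℕ → Prop} [DecidablePred p] {L m n : ℕ} {M : Multiset ℕ}

theorem card_partitionsWithLargest :
    #(partitionsWithLargest p L m) = (#{x ∈ Finset.Icc 1 L | p x}).multichoose m := by
  have cons_injective : Function.Injective fun t : Sym ℕ m => L ::ₘ (t : Multiset ℕ) :=
    fun _ _ h => Sym.coe_injective ((Multiset.cons_inj_right L).1 h)
  rw [partitionsWithLargest, card_image_of_injective _ cons_injective, card_finset_sym]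

theorem mem_partitionsWithLargest (hL : 0 < L) (hpL : p L) :
    M ∈ partitionsWithLargest p L m ↔
      IsPartition M ∧ M.sup = L ∧ Multiset.card M = m + 1 ∧ ∀ x ∈ M, p x := by
  simp only [partitionsWithLargest, Finset.mem_image, mem_sym_iff, Finset.mem_filter,
    Finset.mem_Icc, IsPartition]
  constructor
  · rintro ⟨t, ht, rfl⟩
    have sup_le : (t : Multiset ℕ).sup ≤ L := Multiset.sup_le.2 fun x hx => (ht x hx).1.2
    refine ⟨⟨Multiset.cons_ne_zero, ?_⟩, ?_, by simp, ?_⟩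
    · exact Multiset.forall_mem_cons.2 ⟨hL, fun x hx => (ht x hx).1.1⟩
    · rw [Multiset.sup_cons, sup_eq_left.2 sup_le]
    · exact Multiset.forall_mem_cons.2 ⟨hpL, fun x hx => (ht x hx).2⟩
  · rintro ⟨⟨hM, hpos⟩, rfl, hcard, hp⟩
    obtain ⟨t, ht⟩ := Multiset.exists_cons_of_mem (multiset_sup_mem hM)
    have card_t : Multiset.card t = m := by
      simpa [hcard] using (congrArg Multiset.card ht).symm
    refine ⟨⟨t, card_t⟩, fun x hx => ?_, ht.symm⟩
    have hxM : x ∈ M := ht ▸ Multiset.mem_cons_of_mem hx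
    exact ⟨⟨hpos x hxM, Multiset.le_sup hxM⟩, hp x hxM⟩

theorem IsPartition.perim_eq_iff (hM : IsPartition M) :
    perim M = n ↔ M.sup ≤ n ∧ Multiset.card M = n - M.sup + 1 := by
  have card_pos : 0 < Multiset.card M := Multiset.card_pos.2 hM.1
  unfold perim
  omega

theorem setOf_perim_eq_biUnion_partitionsWithLargest :
    {M : Multiset ℕ | IsPartition M ∧ perim M = n ∧ ∀ x ∈ M, p x} =
      ({L ∈ Finset.Icc 1 n | p L}.biUnion fun L => partitionsWithLargest p L (n - L)) := by
  ext M
  simp only [Set.mem_ofPred_eq, Finset.mem_coe, Finset.mem_biUnion, Finset.mem_filter,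
    Finset.mem_Icc]
  constructor
  · rintro ⟨hM, hperim, hp⟩
    obtain ⟨hle, hcard⟩ := hM.perim_eq_iff.1 hperim
    have sup_mem := multiset_sup_mem hM.1
    have sup_pos := hM.2 _ sup_mem
    exact ⟨M.sup, ⟨⟨sup_pos, hle⟩, hp _ sup_mem⟩,
      (mem_partitionsWithLargest sup_pos (hp _ sup_mem)).2 ⟨hM, rfl, hcard, hp⟩⟩
  · rintro ⟨L, ⟨⟨hL, hLn⟩, hpL⟩, hML⟩
    obtain ⟨hM, rfl, hcard, hp⟩ := (mem_partitionsWithLargest hL hpL).1 hML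
    exact ⟨hM, hM.perim_eq_iff.2 ⟨hLn, hcard⟩, hp⟩

theorem rP_forall_mem_eq_sum_multichoose :
    rP n (fun M => ∀ x ∈ M, p x) =
      ∑ L ∈ Finset.Icc 1 n with p L, (#{x ∈ Finset.Icc 1 L | p x}).multichoose (n - L) := by
  rw [rP, setOf_perim_eq_biUnion_partitionsWithLargest, Set.ncard_coe_finset, card_biUnion]
  · simp only [card_partitionsWithLargest]
  · intro L hL L' hL' hne
    simp only [Finset.mem_coe, Finset.mem_filter, Finset.mem_Icc] at hL hL'
    refine Finset.disjoint_left.2 fun M hM hM' => hne ?_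
    rw [← ((mem_partitionsWithLargest hL.1.1 hL.2).1 hM).2.1,
      ((mem_partitionsWithLargest hL'.1.1 hL'.2).1 hM').2.1]

end LargestPart

section Residues

variable {d : ℕ} {R : Finset ℕ}

theorem eq_of_mod_eq_of_mem_Icc {x y : ℕ} (hx : x ∈ Finset.Icc 1 d) (hy : y ∈ Finset.Icc 1 d)
    (h : x % d = y % d) : x = y := by
  rw [Finset.mem_Icc] at hx hy
  exact Nat.ModEq.eq_of_abs_lt h (abs_lt.2 ⟨by omega, by omega⟩)

theorem exists_eq_add_mul_of_mod_eq {c x : ℕ} (hc : c ∈ Finset.Icc 1 d) (hx : 0 < x)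
    (h : x % d = c % d) : ∃ k, x = c + d * k := by
  have c_le_x : c ≤ x := by
    rcases le_or_gt x d with hxd | hdx
    · exact (eq_of_mod_eq_of_mem_Icc (Finset.mem_Icc.2 ⟨hx, hxd⟩) hc h).ge
    · exact (Finset.mem_Icc.1 hc).2.trans hdx.le
  obtain ⟨k, hk⟩ := (Nat.modEq_iff_dvd' c_le_x).1 h.symm
  exact ⟨k, by omega⟩

theorem sum_filter_exists_mod_eq {β : Type*} [AddCommMonoid β] (hR : R ⊆ Finset.Icc 1 d) (N : ℕ)
    (f : ℕ → β) :
    ∑ x ∈ Finset.Icc 1 N with ∃ c ∈ R, x % d = c % d, f x =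
      ∑ c ∈ R, ∑ k ∈ Finset.range (N + 1) with c + d * k ≤ N, f (c + d * k) := by
  rw [Finset.sum_sigma']
  symm
  refine Finset.sum_nbij (fun ck => ck.1 + d * ck.2) ?_ ?_ ?_ fun _ _ => rfl
  · rintro ⟨c, k⟩ hck
    simp only [Finset.mem_sigma, Finset.mem_filter] at hck
    have c_pos := (Finset.mem_Icc.1 (hR hck.1)).1
    simp only [Finset.mem_filter, Finset.mem_Icc]
    exact ⟨⟨by omega, hck.2.2⟩, c, hck.1, Nat.add_mul_mod_self_left c d k⟩
  · rintro ⟨c, k⟩ hck ⟨c', k'⟩ hck' (heq : c + d * k = c' + d * k')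
    simp only [Finset.mem_coe, Finset.mem_sigma] at hck hck'
    have hmod : c % d = c' % d := by simpa using congrArg (· % d) heq
    obtain rfl := eq_of_mod_eq_of_mem_Icc (hR hck.1) (hR hck'.1) hmod
    have hc := Finset.mem_Icc.1 (hR hck.1)
    obtain rfl := Nat.eq_of_mul_eq_mul_left (by omega) (Nat.add_left_cancel heq)
    rfl
  · intro x hx
    simp only [Finset.mem_coe, Finset.mem_filter, Finset.mem_Icc] at hx
    obtain ⟨⟨hx_pos, hxN⟩, c, hc, hmod⟩ := hx
    obtain ⟨k, rfl⟩ := exists_eq_add_mul_of_mod_eq (hR hc) hx_pos hmod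
    have hcd := Finset.mem_Icc.1 (hR hc)
    have k_le : k ≤ d * k := Nat.le_mul_of_pos_left k (by omega)
    refine ⟨⟨c, k⟩, ?_, rfl⟩
    simp only [Finset.mem_coe, Finset.mem_sigma, Finset.mem_filter, Finset.mem_range]
    exact ⟨hc, by omega, hxN⟩

theorem card_filter_add_mul_le {c e : ℕ} (hce : c ≤ e + d) (hec : e < c + d) (k : ℕ) :
    #{j ∈ Finset.range (e + d * k + 1) | c + d * j ≤ e + d * k} =
      k + if c ≤ e then 1 else 0 := by
  suffices {j ∈ Finset.range (e + d * k + 1) | c + d * j ≤ e + d * k} =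
      Finset.range (k + if c ≤ e then 1 else 0) by rw [this, Finset.card_range]
  ext j
  simp only [Finset.mem_filter, Finset.mem_range]
  have j_le : j ≤ d * j := Nat.le_mul_of_pos_left j (by omega)
  rcases lt_trichotomy j k with hjk | rfl | hkj
  · have : d * (j + 1) ≤ d * k := Nat.mul_le_mul_left d hjk
    grind
  · grind
  · have : d * (k + 1) ≤ d * j := Nat.mul_le_mul_left d hkj
    grind

theorem card_filter_le_eq_card_filter_lt_add_one {α : Type*} [LinearOrder α] {s : Finset α} {c : α}
    (hc : c ∈ s) : #{x ∈ s | x ≤ c} = #{x ∈ s | x < c} + 1 := by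
  have insert_eq : {x ∈ s | x ≤ c} = insert c {x ∈ s | x < c} := by
    ext x
    grind
  rw [insert_eq, Finset.card_insert_of_notMem (by simp)]

theorem card_filter_exists_mod_eq (hR : R ⊆ Finset.Icc 1 d) {c : ℕ} (hc : c ∈ R) (k : ℕ) :
    #{x ∈ Finset.Icc 1 (c + d * k) | ∃ s ∈ R, x % d = s % d} = #R * k + #{s ∈ R | s < c} + 1 := by
  have count_residue (s : ℕ) (hs : s ∈ R) :
      #{j ∈ Finset.range (c + d * k + 1) | s + d * j ≤ c + d * k} =
        k + if s ≤ c then 1 else 0 := by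
    have hs := Finset.mem_Icc.1 (hR hs)
    have hc := Finset.mem_Icc.1 (hR hc)
    exact card_filter_add_mul_le (by omega) (by omega) k
  calc #{x ∈ Finset.Icc 1 (c + d * k) | ∃ s ∈ R, x % d = s % d}
    _ = ∑ s ∈ R, #{j ∈ Finset.range (c + d * k + 1) | s + d * j ≤ c + d * k} := by
      simp only [Finset.card_eq_sum_ones, sum_filter_exists_mod_eq hR]
    _ = ∑ s ∈ R, (k + if s ≤ c then 1 else 0) := Finset.sum_congr rfl count_residue
    _ = #R * k + #{s ∈ R | s ≤ c} := by
      rw [Finset.sum_add_distrib, Finset.sum_const, smul_eq_mul, Finset.card_filter]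
    _ = #R * k + #{s ∈ R | s < c} + 1 := by
      rw [card_filter_le_eq_card_filter_lt_add_one hc, add_assoc]

end Residues

theorem stmt_11_general (d n : ℕ) {R : Finset ℕ} (hR : R ⊆ Finset.Icc 1 d) :
    rP n (fun M => ∀ x ∈ M, ∃ c ∈ R, x % d = c % d) =
      ∑ c ∈ R, ∑ k ∈ (Finset.range (n + 1)).filter (fun k => c + d * k ≤ n),
        Nat.choose (#R * k + #{s ∈ R | s < c} + (n - (c + d * k))) (n - (c + d * k)) := by
  rw [rP_forall_mem_eq_sum_multichoose, sum_filter_exists_mod_eq hR]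
  refine Finset.sum_congr rfl fun c hc => Finset.sum_congr rfl fun k _ => ?_
  rw [card_filter_exists_mod_eq hR hc, Nat.multichoose_eq, Nat.add_right_comm, Nat.add_sub_cancel]

theorem stmt_11 (d a b n : ℕ) (ha : 0 < a) (hab : a < b) (hb : b ≤ d) (hn : 1 ≤ n) :
    ellP d a b n =
      (∑ k ∈ (Finset.range (n + 1)).filter (fun k => a + d * k ≤ n),
        Nat.choose (2 * k + (n - (a + d * k))) (n - (a + d * k))) +
      ∑ k ∈ (Finset.range (n + 1)).filter (fun k => b + d * k ≤ n),
        Nat.choose (2 * k + 1 + (n - (b + d * k))) (n - (b + d * k)) := by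
  have hR : {a, b} ⊆ Finset.Icc 1 d := by grind
  simpa [ellP, hab.ne, hab.not_gt, hab, Finset.filter_insert, Finset.filter_singleton]
    using stmt_11_general d n hR
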